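/- The diameter of U(H) for the geodesic distance d equals π: one has d(u,v) ≤ π for all u, v ∈ U(H), and there exist u, v ∈ U(H) with d(u,v) = π (for instance u and −u). -/

import Mathlib

noncomputable section

abbrev Hsp (N : ℕ) : Type := EuclideanSpace ℂ (Fin N)

abbrev Op (N : ℕ) : Type := Hsp N →L[ℂ] Hsp N

/-- A map `γ : ℝ → E` is piecewise C¹ on `[a,b]` if there is a partition
`a = τ 0 ≤ τ 1 ≤ ⋯ ≤ τ n = b` such that `γ` is C¹ on each subinterval. -/
def PiecewiseC1On {E : Type*} [NormedAddCommGroup E] [NormedSpace ℝ E]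
    (γ : ℝ → E) (a b : ℝ) : Prop :=
  ∃ (n : ℕ) (τ : ℕ → ℝ), τ 0 = a ∧ τ n = b ∧ (∀ i < n, τ i ≤ τ (i + 1)) ∧
    ∀ i < n, ContDiffOn ℝ 1 γ (Set.Icc (τ i) (τ (i + 1)))

/-- The length `L(γ) = ∫_a^b ‖γ'(t)‖ dt` of a curve. -/
def pathLength {E : Type*} [NormedAddCommGroup E] [NormedSpace ℝ E]
    (γ : ℝ → E) (a b : ℝ) : ℝ :=
  ∫ t in a..b, ‖deriv γ t‖

/-- Geodesic distance on the unitary group of `EuclideanSpace ℂ (Fin N)`, for the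
Finsler metric given by the operator norm: the infimum of lengths of piecewise C¹
curves in the unitary group joining `u` to `v`. -/
def geoDist (N : ℕ) (u v : Op N) : ℝ :=
  sInf {l | ∃ (a b : ℝ) (γ : ℝ → Op N), a ≤ b ∧ PiecewiseC1On γ a b ∧
    (∀ t ∈ Set.Icc a b, γ t ∈ unitary (Op N)) ∧ γ a = u ∧ γ b = v ∧
    l = pathLength γ a b}

/-- `(u, φ)` belongs to the realization `Ũ(H) = {(u,φ) : det u = e^{iφ}}` of the
universal cover of the unitary group. -/
def InUCover (N : ℕ) (u : Op N) (φ : ℝ) : Prop :=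
  u ∈ unitary (Op N) ∧
    LinearMap.det (u : Hsp N →ₗ[ℂ] Hsp N) = Complex.exp (φ * Complex.I)

/-- Geodesic distance on the universal cover `Ũ(H)`: the infimum of the lengths
`∫ ‖γ'(t)‖ dt` over piecewise C¹ curves `t ↦ (γ t, f t)` in `Ũ(H)` joining
`(u, φ)` to `(v, ψ)`. -/
def ucoverDist (N : ℕ) (u : Op N) (φ : ℝ) (v : Op N) (ψ : ℝ) : ℝ :=
  sInf {l | ∃ (a b : ℝ) (γ : ℝ → Op N) (f : ℝ → ℝ), a ≤ b ∧
    PiecewiseC1On (fun t => (γ t, f t)) a b ∧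
    (∀ t ∈ Set.Icc a b, InUCover N (γ t) (f t)) ∧
    γ a = u ∧ f a = φ ∧ γ b = v ∧ f b = ψ ∧
    l = pathLength γ a b}

/-- The multiset of eigenvalues (with multiplicity) of an endomorphism, i.e. the
roots of its characteristic polynomial. -/
def eigenvalueMultiset (N : ℕ) (w : Op N) : Multiset ℂ :=
  (LinearMap.charpoly (w : Hsp N →ₗ[ℂ] Hsp N)).roots

/-- `θ ∈ R`: `(e^{iθ_j})_j` is the family of eigenvalues of `w` (with multiplicity)
and `∑ θ_j = c`. -/
def InRSet (N : ℕ) (w : Op N) (c : ℝ) (θ : Fin N → ℝ) : Prop :=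
  Multiset.map (fun j => Complex.exp ((θ j : ℂ) * Complex.I)) Finset.univ.val
      = eigenvalueMultiset N w ∧ ∑ j, θ j = c

/-- `m = min { max_j |θ_j| : θ ∈ R }`. -/
def mval (N : ℕ) (w : Op N) (c : ℝ) : ℝ :=
  sInf {x | ∃ θ : Fin N → ℝ, InRSet N w c θ ∧ x = ⨆ j, |θ j|}

end

/-!
For the upper bound, every unitary `w` of a finite-dimensional C⋆-algebra is `exp (i a)` with `a`
self-adjoint and `‖a‖ ≤ π`, because its spectrum is finite and `arg` is therefore continuous on it.
The curve `t ↦ u exp (i t a)`, with `w = u⁻¹ v`, joins `u` to `v` and has constant speed `‖a‖`.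

For the lower bound, fix a unit vector `x`. A curve of unitaries `γ` from `u` to `-u` moves the
point `γ t x` of the unit sphere from `u x` to its antipode, at speed at most `‖γ' t‖`. On the unit
sphere the angle to a fixed point grows at most as fast as arc length, so the length is at least
`π`.
-/

open Set MeasureTheory Filter Topology InnerProductGeometry selfAdjoint Unitary
open scoped RealInnerProductSpace

section Arccos

variable {f f' φ : ℝ → ℝ} {a b : ℝ}

theorem arccos_sub_arccos_le_integral_of_abs_lt_one (hab : a ≤ b) (hf : ContinuousOn f (Icc a b))
    (hderiv : ∀ t ∈ Ioo a b, HasDerivAt f (f' t) t) (hφ : IntegrableOn φ (Icc a b))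
    (hf_lt : ∀ t ∈ Ioo a b, |f t| < 1)
    (hle : ∀ t ∈ Ioo a b, -f' t ≤ √(1 - f t ^ 2) * φ t) :
    Real.arccos (f b) - Real.arccos (f a) ≤ ∫ t in a..b, φ t := by
  refine intervalIntegral.sub_le_integral_of_hasDeriv_right_of_le
    (g := fun t ↦ Real.arccos (f t)) (g' := fun t ↦ -(1 / √(1 - f t ^ 2)) * f' t) hab
    (Real.continuous_arccos.comp_continuousOn hf) (fun t ht ↦ ?_) hφ fun t ht ↦ ?_
  · obtain ⟨h_neg, h_pos⟩ := abs_lt.1 (hf_lt t ht)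
    exact ((Real.hasDerivAt_arccos h_neg.ne' h_pos.ne).comp t (hderiv t ht)).hasDerivWithinAt
  · have h_sqrt : 0 < √(1 - f t ^ 2) :=
      Real.sqrt_pos.2 (sub_pos.2 ((sq_lt_one_iff_abs_lt_one _).2 (hf_lt t ht)))
    calc -(1 / √(1 - f t ^ 2)) * f' t = -f' t / √(1 - f t ^ 2) := by ring
      _ ≤ φ t := (div_le_iff₀' h_sqrt).2 (hle t ht)

theorem arccos_sub_arccos_le_integral (hab : a ≤ b) (hf : ContinuousOn f (Icc a b))
    (hderiv : ∀ t ∈ Ioo a b, HasDerivAt f (f' t) t) (hφ : IntegrableOn φ (Icc a b))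
    (hφ_nonneg : ∀ t ∈ Ioo a b, 0 ≤ φ t) (hf_le : ∀ t ∈ Ioo a b, |f t| ≤ 1)
    (hle : ∀ t ∈ Ioo a b, -f' t ≤ √(1 - f t ^ 2) * φ t) :
    Real.arccos (f b) - Real.arccos (f a) ≤ ∫ t in a..b, φ t := by
  -- `arccos` is not differentiable at `±1`, so work with `r * f` for `r < 1` and let `r → 1`.
  have h_scaled : ∀ r ∈ Ioo (0 : ℝ) 1,
      Real.arccos (r * f b) - Real.arccos (r * f a) ≤ ∫ t in a..b, φ t := by
    intro r hr
    refine arccos_sub_arccos_le_integral_of_abs_lt_one (f := fun t ↦ r * f t) hab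
      (continuousOn_const.mul hf) (fun t ht ↦ (hderiv t ht).const_mul r) hφ (fun t ht ↦ ?_)
      fun t ht ↦ ?_
    · calc |r * f t| = r * |f t| := by rw [abs_mul, abs_of_pos hr.1]
        _ ≤ r := mul_le_of_le_one_right hr.1.le (hf_le t ht)
        _ < 1 := hr.2
    · have h_sqrt : r * √(1 - f t ^ 2) ≤ √(1 - (r * f t) ^ 2) := by
        refine Real.le_sqrt_of_sq_le ?_
        rw [mul_pow, Real.sq_sqrt (sub_nonneg.2 ((sq_le_one_iff_abs_le_one _).2 (hf_le t ht)))]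
        nlinarith [hr.1, hr.2]
      calc -(r * f' t) = r * -f' t := by ring
        _ ≤ r * (√(1 - f t ^ 2) * φ t) := mul_le_mul_of_nonneg_left (hle t ht) hr.1.le
        _ = r * √(1 - f t ^ 2) * φ t := by ring
        _ ≤ √(1 - (r * f t) ^ 2) * φ t := mul_le_mul_of_nonneg_right h_sqrt (hφ_nonneg t ht)
  have h_lim : Tendsto (fun r ↦ Real.arccos (r * f b) - Real.arccos (r * f a)) (𝓝[<] 1)
      (𝓝 (Real.arccos (1 * f b) - Real.arccos (1 * f a))) := by
    have h_cont : Continuous fun r ↦ Real.arccos (r * f b) - Real.arccos (r * f a) := by fun_prop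
    exact (h_cont.tendsto 1).mono_left nhdsWithin_le_nhds
  rw [one_mul, one_mul] at h_lim
  exact le_of_tendsto h_lim (eventually_of_mem (Ioo_mem_nhdsLT zero_lt_one) h_scaled)

end Arccos

section PathLength

variable {E F : Type*} [NormedAddCommGroup E] [NormedSpace ℝ E]
  [NormedAddCommGroup F] [NormedSpace ℝ F] {γ : ℝ → E} {a b : ℝ}

theorem hasDerivAt_of_contDiffOn_Icc (hγ : ContDiffOn ℝ 1 γ (Icc a b)) {t : ℝ}
    (ht : t ∈ Ioo a b) : HasDerivAt γ (deriv γ t) t :=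
  ((hγ.differentiableOn one_ne_zero).differentiableAt (Icc_mem_nhds ht.1 ht.2)).hasDerivAt

theorem integrableOn_deriv_of_contDiffOn_Icc (hγ : ContDiffOn ℝ 1 γ (Icc a b)) :
    IntegrableOn (deriv γ) (Icc a b) := by
  rcases lt_or_ge a b with hab | hba
  · have h_within : IntegrableOn (derivWithin γ (Icc a b)) (Icc a b) :=
      (hγ.continuousOn_derivWithin (uniqueDiffOn_Icc hab) le_rfl).integrableOn_Icc
    rw [integrableOn_Icc_iff_integrableOn_Ioo] at h_within ⊢
    exact h_within.congr_fun (fun t ht ↦ derivWithin_of_mem_nhds (Icc_mem_nhds ht.1 ht.2))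
      measurableSet_Ioo
  · exact IntegrableOn.of_measure_zero (by simp [hba])

theorem pathLength_nonneg (γ : ℝ → E) (hab : a ≤ b) : 0 ≤ pathLength γ a b :=
  intervalIntegral.integral_nonneg hab fun _ _ ↦ norm_nonneg _

theorem pathLength_clm_comp_le (L : E →L[ℝ] F) (hab : a ≤ b) (hγ : ContDiffOn ℝ 1 γ (Icc a b)) :
    pathLength (fun t ↦ L (γ t)) a b ≤ ‖L‖ * pathLength γ a b := by
  have hLγ : ContDiffOn ℝ 1 (fun t ↦ L (γ t)) (Icc a b) := L.contDiff.comp_contDiffOn hγ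
  unfold pathLength
  rw [← intervalIntegral.integral_const_mul]
  refine intervalIntegral.integral_mono_on_of_le_Ioo hab ?_ ?_ fun t ht ↦ ?_
  · exact (intervalIntegrable_iff_integrableOn_Icc_of_le hab).2
      (integrableOn_deriv_of_contDiffOn_Icc hLγ).norm
  · exact ((intervalIntegrable_iff_integrableOn_Icc_of_le hab).2
      (integrableOn_deriv_of_contDiffOn_Icc hγ).norm).const_mul _
  · have h_deriv : HasDerivAt (fun t ↦ L (γ t)) (L (deriv γ t)) t :=
      L.hasFDerivAt.comp_hasDerivAt t (hasDerivAt_of_contDiffOn_Icc hγ ht)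
    rw [h_deriv.deriv]
    exact L.le_opNorm _

theorem piecewiseC1On_of_contDiff (hγ : ContDiff ℝ 1 γ) (hab : a ≤ b) : PiecewiseC1On γ a b :=
  ⟨1, fun i ↦ if i = 0 then a else b, by simp, by simp, by simpa, fun _ _ ↦ hγ.contDiffOn⟩

theorem PiecewiseC1On.sub_le_mul_pathLength (hγ : PiecewiseC1On γ a b) {g : ℝ → ℝ} {C : ℝ}
    (hg : ∀ p q, p ≤ q → Icc p q ⊆ Icc a b → ContDiffOn ℝ 1 γ (Icc p q) →
      g q - g p ≤ C * pathLength γ p q) :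
    g b - g a ≤ C * pathLength γ a b := by
  obtain ⟨n, τ, rfl, rfl, hτ, hC1⟩ := hγ
  have hτ_mono : MonotoneOn τ (Iic n) :=
    monotoneOn_of_le_add_one ordConnected_Iic fun i _ _ hi ↦ hτ i hi
  have h_subset : ∀ i < n, Icc (τ i) (τ (i + 1)) ⊆ Icc (τ 0) (τ n) := fun i hi ↦
    Icc_subset_Icc (hτ_mono n.zero_le hi.le i.zero_le) (hτ_mono hi self_mem_Iic hi)
  have h_integrable : ∀ i < n, IntervalIntegrable (fun t ↦ ‖deriv γ t‖) volume (τ i) (τ (i + 1)) :=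
    fun i hi ↦ (intervalIntegrable_iff_integrableOn_Icc_of_le (hτ i hi)).2
      (integrableOn_deriv_of_contDiffOn_Icc (hC1 i hi)).norm
  calc g (τ n) - g (τ 0) = ∑ i ∈ Finset.range n, (g (τ (i + 1)) - g (τ i)) :=
        (Finset.sum_range_sub (fun i ↦ g (τ i)) n).symm
    _ ≤ ∑ i ∈ Finset.range n, C * pathLength γ (τ i) (τ (i + 1)) :=
        Finset.sum_le_sum fun i hi ↦ by
          rw [Finset.mem_range] at hi
          exact hg _ _ (hτ i hi) (h_subset i hi) (hC1 i hi)
    _ = C * pathLength γ (τ 0) (τ n) := by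
        rw [← Finset.mul_sum]
        exact congrArg (C * ·) (intervalIntegral.sum_integral_adjacent_intervals h_integrable)

end PathLength

section Sphere

variable {E V : Type*} [NormedAddCommGroup E] [NormedSpace ℝ E]
  [NormedAddCommGroup V] [InnerProductSpace ℝ V]

theorem inner_eq_zero_of_hasDerivAt_of_norm_eq {c : ℝ → V} {c' : V} {t r : ℝ}
    (hc : HasDerivAt c c' t) (hr : ∀ᶠ s in 𝓝 t, ‖c s‖ = r) : ⟪c t, c'⟫ = 0 := by
  have h_const : HasDerivAt (‖c ·‖ ^ 2) 0 t :=
    (hasDerivAt_const t (r ^ 2)).congr_of_eventuallyEq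
      (hr.mono fun s hs ↦ congrArg (· ^ 2) hs)
  simpa using hc.norm_sq.unique h_const

/-- `⟪y, w⟫` only sees the component of `y` orthogonal to `z`, whose norm is the square root. -/
theorem abs_inner_le_sqrt_mul_norm {y z w : V} (hy : ‖y‖ = 1) (hz : ‖z‖ = 1) (hzw : ⟪z, w⟫ = 0) :
    |⟪y, w⟫| ≤ √(1 - ⟪y, z⟫ ^ 2) * ‖w‖ := by
  have h_inner : ⟪y, w⟫ = ⟪y - ⟪y, z⟫ • z, w⟫ := by
    rw [inner_sub_left, real_inner_smul_left, hzw, mul_zero, sub_zero]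
  have h_norm : ‖y - ⟪y, z⟫ • z‖ ^ 2 = 1 - ⟪y, z⟫ ^ 2 := by
    rw [norm_sub_sq_real, real_inner_smul_right, norm_smul, hy, hz, mul_one, Real.norm_eq_abs,
      sq_abs]
    ring
  rw [h_inner, ← h_norm, Real.sqrt_sq (norm_nonneg _)]
  exact abs_real_inner_le_norm _ _

theorem angle_sub_angle_le_pathLength_of_contDiffOn {c : ℝ → V} {y : V} {a b : ℝ} (hab : a ≤ b)
    (hc : ContDiffOn ℝ 1 c (Icc a b)) (hc_norm : ∀ t ∈ Icc a b, ‖c t‖ = 1) (hy : ‖y‖ = 1) :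
    angle y (c b) - angle y (c a) ≤ pathLength c a b := by
  have h_angle : ∀ t ∈ Icc a b, angle y (c t) = Real.arccos ⟪y, c t⟫ := fun t ht ↦ by
    rw [angle, hy, hc_norm t ht, mul_one, div_one]
  rw [h_angle b (right_mem_Icc.2 hab), h_angle a (left_mem_Icc.2 hab)]
  refine arccos_sub_arccos_le_integral (f := fun t ↦ ⟪y, c t⟫) (f' := fun t ↦ ⟪y, deriv c t⟫) hab
    (continuousOn_const.inner hc.continuousOn) (fun t ht ↦ ?_)
    (integrableOn_deriv_of_contDiffOn_Icc hc).norm (fun _ _ ↦ norm_nonneg _) (fun t ht ↦ ?_)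
    fun t ht ↦ ?_
  · exact (innerSL ℝ y).hasFDerivAt.comp_hasDerivAt t (hasDerivAt_of_contDiffOn_Icc hc ht)
  · simpa only [hy, hc_norm t (Ioo_subset_Icc_self ht), mul_one]
      using abs_real_inner_le_norm y (c t)
  · have h_orth : ⟪c t, deriv c t⟫ = 0 :=
      inner_eq_zero_of_hasDerivAt_of_norm_eq (hasDerivAt_of_contDiffOn_Icc hc ht)
        (eventually_of_mem (Icc_mem_nhds ht.1 ht.2) hc_norm)
    exact (neg_le_abs _).trans
      (abs_inner_le_sqrt_mul_norm hy (hc_norm t (Ioo_subset_Icc_self ht)) h_orth)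

theorem PiecewiseC1On.angle_sub_angle_clm_le {γ : ℝ → E} {a b : ℝ} (hγ : PiecewiseC1On γ a b)
    (L : E →L[ℝ] V) (hL : ∀ t ∈ Icc a b, ‖L (γ t)‖ = 1) {y : V} (hy : ‖y‖ = 1) :
    angle y (L (γ b)) - angle y (L (γ a)) ≤ ‖L‖ * pathLength γ a b :=
  hγ.sub_le_mul_pathLength (g := fun t ↦ angle y (L (γ t))) fun _ _ hpq h_subset hC1 ↦
    (angle_sub_angle_le_pathLength_of_contDiffOn hpq (L.contDiff.comp_contDiffOn hC1)
      (fun t ht ↦ hL t (h_subset ht)) hy).trans (pathLength_clm_comp_le L hpq hC1)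

end Sphere

theorem pi_le_pathLength_of_unitary_of_eq_neg {H : Type*} [NormedAddCommGroup H]
    [InnerProductSpace ℂ H] [CompleteSpace H] [Nontrivial H] {γ : ℝ → H →L[ℂ] H} {a b : ℝ}
    (hab : a ≤ b) (hγ : PiecewiseC1On γ a b) (hU : ∀ t ∈ Icc a b, γ t ∈ unitary (H →L[ℂ] H))
    (h_neg : γ b = -γ a) : Real.pi ≤ pathLength γ a b := by
  let : InnerProductSpace ℝ H := InnerProductSpace.complexToReal
  obtain ⟨x, hx⟩ := exists_norm_eq H zero_le_one
  let evalAt : (H →L[ℂ] H) →L[ℝ] H := (ContinuousLinearMap.apply ℂ H x).restrictScalars ℝ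
  have h_eval : ‖evalAt‖ ≤ 1 := evalAt.opNorm_le_bound zero_le_one fun w ↦ by
    rw [one_mul]
    exact w.unit_le_opNorm x hx.le
  have h_norm : ∀ t ∈ Icc a b, ‖γ t x‖ = 1 := fun t ht ↦
    (ContinuousLinearMap.norm_map_of_mem_unitary (hU t ht) x).trans hx
  have h_start : ‖γ a x‖ = 1 := h_norm a (left_mem_Icc.2 hab)
  have h_ne : γ a x ≠ 0 := norm_ne_zero_iff.1 (h_start ▸ one_ne_zero)
  calc Real.pi = angle (γ a x) (γ b x) - angle (γ a x) (γ a x) := by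
        rw [h_neg, neg_apply, angle_self_neg_of_nonzero h_ne, angle_self h_ne,
          sub_zero]
    _ ≤ ‖evalAt‖ * pathLength γ a b := hγ.angle_sub_angle_clm_le evalAt h_norm h_start
    _ ≤ pathLength γ a b := mul_le_of_le_one_left (pathLength_nonneg γ hab) h_eval

theorem spectrum_finite_of_finiteDimensional (K : Type*) {A : Type*} [Field K] [Ring A]
    [Algebra K A] [FiniteDimensional K A] (a : A) : (spectrum K a).Finite := by
  nontriviality A
  refine ((minpoly K a).rootSet_finite K).subset fun μ hμ ↦ ?_
  have h_eval : (minpoly K a).eval μ ∈ spectrum K (Polynomial.aeval a (minpoly K a)) :=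
    spectrum.subset_polynomial_aeval a _ ⟨μ, hμ, rfl⟩
  rw [minpoly.aeval, spectrum.zero_eq, mem_singleton_iff] at h_eval
  exact Polynomial.mem_rootSet.2
    ⟨minpoly.ne_zero (Algebra.IsIntegral.isIntegral a), by rwa [Polynomial.coe_aeval_eq_eval]⟩

section CStarAlgebra

variable {A : Type*} [CStarAlgebra A]

theorem expUnitary_argSelfAdjoint_of_continuousOn {u : unitary A}
    (hu : ContinuousOn Complex.arg (spectrum ℂ (u : A))) : expUnitary (argSelfAdjoint u) = u := by
  ext
  rw [expUnitary_coe, argSelfAdjoint_coe, ← CFC.exp_eq_normedSpace_exp (𝕜 := ℂ),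
    ← cfc_comp_smul .., ← cfc_comp' ..]
  conv_rhs => rw [← cfc_id' ℂ (u : A)]
  refine cfc_congr fun z hz ↦ ?_
  have hz_norm : ‖z‖ = 1 := spectrum.norm_eq_one_of_unitary u.2 hz
  have h_exp : Complex.exp (z.arg * Complex.I) = z := by
    simpa [hz_norm] using Complex.norm_mul_exp_arg_mul_I z
  simpa [← Complex.exp_eq_exp_ℂ, mul_comm] using h_exp

/-- The curve `t ↦ u exp (i t a)` in the unitary group of a C⋆-algebra: the left translate to `u`
of the one-parameter group generated by the self-adjoint element `a`. -/
noncomputable def expCurve (u : unitary A) (a : selfAdjoint A) (t : ℝ) : unitary A :=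
  u * expUnitary (t • a)

variable (u : unitary A) (a : selfAdjoint A)

theorem expCurve_zero : expCurve u a 0 = u := by
  rw [expCurve, zero_smul, expUnitary_zero, mul_one]

theorem expCurve_one : expCurve u a 1 = u * expUnitary a := by
  rw [expCurve, one_smul]

theorem hasDerivAt_expCurve (t : ℝ) :
    HasDerivAt (fun s ↦ (expCurve u a s : A)) (expCurve u a t * (Complex.I • (a : A))) t := by
  have h_coe : ∀ s : ℝ,
      (expCurve u a s : A) = u * NormedSpace.exp (s • (Complex.I • (a : A))) := fun s ↦ by
    rw [expCurve, Submonoid.coe_mul, expUnitary_coe, val_smul, smul_comm]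
  simp only [h_coe, mul_assoc]
  exact (hasDerivAt_exp_smul_const (𝕂 := ℝ) (Complex.I • (a : A)) t).const_mul _

theorem contDiff_expCurve : ContDiff ℝ 1 fun t ↦ (expCurve u a t : A) := by
  have h_diff : Differentiable ℝ fun t ↦ (expCurve u a t : A) :=
    fun t ↦ (hasDerivAt_expCurve u a t).differentiableAt
  rw [contDiff_one_iff_deriv, funext fun t ↦ (hasDerivAt_expCurve u a t).deriv]
  exact ⟨h_diff, h_diff.continuous.mul continuous_const⟩

theorem pathLength_expCurve (p q : ℝ) :
    pathLength (fun t ↦ (expCurve u a t : A)) p q = (q - p) * ‖a‖ := by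
  have h_speed : ∀ t, ‖deriv (fun t ↦ (expCurve u a t : A)) t‖ = ‖a‖ := fun t ↦ by
    rw [(hasDerivAt_expCurve u a t).deriv, CStarRing.norm_coe_unitary_mul, norm_smul,
      Complex.norm_I, one_mul]
    rfl
  simp only [pathLength, h_speed, intervalIntegral.integral_const, smul_eq_mul]

end CStarAlgebra

section GeoDist

variable {N : ℕ}

/-- The set of lengths of piecewise C¹ curves of unitaries from `u` to `v`. Its infimum is
`geoDist N u v`, definitionally. -/
def curveLengths (N : ℕ) (u v : Op N) : Set ℝ :=
  {l | ∃ (a b : ℝ) (γ : ℝ → Op N), a ≤ b ∧ PiecewiseC1On γ a b ∧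
    (∀ t ∈ Icc a b, γ t ∈ unitary (Op N)) ∧ γ a = u ∧ γ b = v ∧ l = pathLength γ a b}

theorem bddBelow_curveLengths (u v : Op N) : BddBelow (curveLengths N u v) := by
  refine ⟨0, ?_⟩
  rintro _ ⟨a, b, γ, hab, -, -, -, -, rfl⟩
  exact pathLength_nonneg γ hab

theorem norm_argSelfAdjoint_mem_curveLengths (u v : unitary (Op N)) :
    ‖argSelfAdjoint (u⁻¹ * v)‖ ∈ curveLengths N u v := by
  have h_exp : expUnitary (argSelfAdjoint (u⁻¹ * v)) = u⁻¹ * v :=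
    expUnitary_argSelfAdjoint_of_continuousOn
      ((spectrum_finite_of_finiteDimensional ℂ _).continuousOn _)
  refine ⟨0, 1, fun t ↦ expCurve u (argSelfAdjoint (u⁻¹ * v)) t, zero_le_one,
    piecewiseC1On_of_contDiff (contDiff_expCurve u _) zero_le_one,
    fun t _ ↦ (expCurve u _ t).2, ?_, ?_, ?_⟩
  · exact congrArg Subtype.val (expCurve_zero u _)
  · have h_end : expCurve u (argSelfAdjoint (u⁻¹ * v)) 1 = v := by
      rw [expCurve_one, h_exp, mul_inv_cancel_left]
    exact congrArg Subtype.val h_end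
  · rw [pathLength_expCurve, sub_zero, one_mul]

theorem geoDist_le_pi (u v : unitary (Op N)) : geoDist N u v ≤ Real.pi :=
  (csInf_le (bddBelow_curveLengths _ _) (norm_argSelfAdjoint_mem_curveLengths u v)).trans
    (norm_argSelfAdjoint_le_pi _)

theorem pi_le_geoDist_neg_self (hN : 1 ≤ N) (u : unitary (Op N)) :
    Real.pi ≤ geoDist N u (-(u : Op N)) := by
  have : NeZero N := ⟨Nat.one_le_iff_ne_zero.1 hN⟩
  refine le_csInf ⟨_, norm_argSelfAdjoint_mem_curveLengths u (-u)⟩ ?_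
  rintro _ ⟨a, b, γ, hab, hγ, hU, h_start, h_end, rfl⟩
  exact pi_le_pathLength_of_unitary_of_eq_neg hab hγ hU (by rw [h_start, h_end])

end GeoDist

/-- the diameter of `U(H)` for the geodesic distance is `π`:
`d(u,v) ≤ π` for all `u, v`, and `d(u, -u) = π` for every unitary `u`. -/
theorem geoDist_le_pi_and_geoDist_neg_self (N : ℕ) (hN : 1 ≤ N) :
    (∀ u v : unitary (Op N), geoDist N ↑u ↑v ≤ Real.pi) ∧
      (∀ u : unitary (Op N), geoDist N ↑u (-(↑u : Op N)) = Real.pi) :=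
  ⟨geoDist_le_pi, fun u ↦ (geoDist_le_pi u (-u)).antisymm (pi_le_geoDist_neg_self hN u)⟩
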